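/- arXiv:1202.4711 — 5 statements merged into one kernel-verified Lean document; each statement's English description precedes it below -/
import Mathlib

section
/- There exists a constant C > 0 with the following property: for every a > 0 and every function w : ℝ ∖ {−a, a} → ℝ that is continuously differentiable on each of the three intervals (−∞, −a), (−a, a), (a, ∞) and such that w and w' have finite one-sided limits at −a and at a, there exists a function r : ℝ ∖ {−a, a} → ℝ such that: (i) r vanishes identically on (−a, a); (ii) r is infinitely differentiable on ℝ ∖ {−a, a} and has compact support; (iii) the function w + r together with its first derivative has equal one-sided limits at −a and at a (i.e. [w+r]_{−a} = [w+r]_{a} = [(w+r)']_{−a} = [(w+r)']_{a} = 0); and (iv) for k = 0, 1, 2 and all x ∈ ℝ ∖ {−a, a}, |r^{(k)}(x)| ≤ C (|[w]_{−a}| + |[w]_{a}| + |[w']_{−a}| + |[w']_{a}|). The constant C does not depend on w or on a. -/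
/-!
Fix a smooth cutoff `χ` equal to `1` near `0`. The function `F(y) = (α + β y) χ(y)` is smooth,
compactly supported, has `F(0) = α`, `F'(0) = β`, and `F`, `F'`, `F''` are bounded by
`K (|α| + |β|)` with `K` depending on `χ` only (`exists_profile`). The corrector is `0` on `[-a, a]`,
a translate `F(x - a)` to the right of `a` and a translate `G(x + a)` to the left of `-a`, where the
data of `F` cancel the jumps of `w`, `w'` at `a` and those of `G` cancel the jumps at `-a`
(`corrector`). Only translations are involved, so the bounds do not depend on `a`.
-/

open Set Filter Topology

/-- Smooth compactly supported functions with prescribed value and derivative at `0`, and with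
`C²` norm controlled linearly by these data. -/
lemma exists_profile : ∃ K > 0, ∀ α β : ℝ, ∃ F : ℝ → ℝ,
    ContDiff ℝ (⊤ : ℕ∞) F ∧ HasCompactSupport F ∧ F 0 = α ∧ deriv F 0 = β ∧
    ∀ x, |F x| ≤ K * (|α| + |β|) ∧ |deriv F x| ≤ K * (|α| + |β|) ∧
      |deriv (deriv F) x| ≤ K * (|α| + |β|) := by
  let χ : ContDiffBump (0 : ℝ) := ⟨1, 2, one_pos, one_lt_two⟩
  let f : ℝ → ℝ := fun x => χ x
  let g : ℝ → ℝ := fun x => x * χ x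
  have hf : ContDiff ℝ (⊤ : ℕ∞) f := χ.contDiff
  have hg : ContDiff ℝ (⊤ : ℕ∞) g := contDiff_id.mul χ.contDiff
  have hfc : HasCompactSupport f := χ.hasCompactSupport
  have hgc : HasCompactSupport g := HasCompactSupport.mul_left χ.hasCompactSupport
  have hf' : ContDiff ℝ (⊤ : ℕ∞) (deriv f) := (contDiff_infty_iff_deriv.1 hf).2
  have hg' : ContDiff ℝ (⊤ : ℕ∞) (deriv g) := (contDiff_infty_iff_deriv.1 hg).2
  have hf'' : ContDiff ℝ (⊤ : ℕ∞) (deriv (deriv f)) := (contDiff_infty_iff_deriv.1 hf').2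
  have hg'' : ContDiff ℝ (⊤ : ℕ∞) (deriv (deriv g)) := (contDiff_infty_iff_deriv.1 hg').2
  have hloc : ∀ᶠ x in 𝓝 (0 : ℝ), χ x = 1 := χ.eventuallyEq_one
  have hf0 : f 0 = 1 := hloc.self_of_nhds
  have hdf0 : deriv f 0 = 0 := by
    have h : f =ᶠ[𝓝 0] fun _ => (1 : ℝ) := hloc
    simpa using h.deriv_eq
  have hdg0 : deriv g 0 = 1 := by
    have h : g =ᶠ[𝓝 0] fun x => x := by
      filter_upwards [hloc] with x hx
      simp [g, hx]
    simpa using h.deriv_eq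
  obtain ⟨K₀, h₀⟩ := hfc.exists_bound_of_continuous hf.continuous
  obtain ⟨K₁, h₁⟩ := hfc.deriv.exists_bound_of_continuous hf'.continuous
  obtain ⟨K₂, h₂⟩ := hfc.deriv.deriv.exists_bound_of_continuous hf''.continuous
  obtain ⟨L₀, l₀⟩ := hgc.exists_bound_of_continuous hg.continuous
  obtain ⟨L₁, l₁⟩ := hgc.deriv.exists_bound_of_continuous hg'.continuous
  obtain ⟨L₂, l₂⟩ := hgc.deriv.deriv.exists_bound_of_continuous hg''.continuous
  simp only [Real.norm_eq_abs] at h₀ h₁ h₂ l₀ l₁ l₂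
  have p₀ := (abs_nonneg _).trans (h₀ 0)
  have p₁ := (abs_nonneg _).trans (h₁ 0)
  have p₂ := (abs_nonneg _).trans (h₂ 0)
  have q₀ := (abs_nonneg _).trans (l₀ 0)
  have q₁ := (abs_nonneg _).trans (l₁ 0)
  have q₂ := (abs_nonneg _).trans (l₂ 0)
  refine ⟨K₀ + K₁ + K₂ + L₀ + L₁ + L₂ + 1, by positivity, fun α β => ?_⟩
  have comb : ∀ u v M N : ℝ, |u| ≤ M → |v| ≤ N →
      M ≤ K₀ + K₁ + K₂ + L₀ + L₁ + L₂ + 1 → N ≤ K₀ + K₁ + K₂ + L₀ + L₁ + L₂ + 1 →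
      |α * u + β * v| ≤ (K₀ + K₁ + K₂ + L₀ + L₁ + L₂ + 1) * (|α| + |β|) := by
    intro u v M N hu hv hM hN
    calc |α * u + β * v| ≤ |α| * |u| + |β| * |v| := by
          simpa only [abs_mul] using abs_add_le (α * u) (β * v)
      _ ≤ |α| * (K₀ + K₁ + K₂ + L₀ + L₁ + L₂ + 1) + |β| * (K₀ + K₁ + K₂ + L₀ + L₁ + L₂ + 1) :=
          add_le_add (mul_le_mul_of_nonneg_left (hu.trans hM) (abs_nonneg _))
            (mul_le_mul_of_nonneg_left (hv.trans hN) (abs_nonneg _))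
      _ = _ := by ring
  have diff : ∀ {h : ℝ → ℝ}, ContDiff ℝ (⊤ : ℕ∞) h → Differentiable ℝ h :=
    fun h => h.differentiable (by simp)
  have hd : deriv (fun x => α * f x + β * g x) = fun x => α * deriv f x + β * deriv g x :=
    funext fun x =>
      (((diff hf x).hasDerivAt.const_mul α).add ((diff hg x).hasDerivAt.const_mul β)).deriv
  have hdd : deriv (fun x => α * deriv f x + β * deriv g x) =
      fun x => α * deriv (deriv f) x + β * deriv (deriv g) x :=
    funext fun x =>
      (((diff hf' x).hasDerivAt.const_mul α).add ((diff hg' x).hasDerivAt.const_mul β)).deriv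
  refine ⟨fun x => α * f x + β * g x, (contDiff_const.mul hf).add (contDiff_const.mul hg),
    HasCompactSupport.add (HasCompactSupport.mul_left hfc) (HasCompactSupport.mul_left hgc),
    by simp [hf0, g], by simp [hd, hdf0, hdg0], fun x => ?_⟩
  rw [hd, hdd]
  exact ⟨comb _ _ _ _ (h₀ x) (l₀ x) (by linarith) (by linarith),
    comb _ _ _ _ (h₁ x) (l₁ x) (by linarith) (by linarith),
    comb _ _ _ _ (h₂ x) (l₂ x) (by linarith) (by linarith)⟩

/-- The function equal to `F (x - a)` for `x > a`, to `G (x + a)` for `x < -a`, and to `0` on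
`[-a, a]`. -/
noncomputable def corrector (a : ℝ) (F G : ℝ → ℝ) (x : ℝ) : ℝ :=
  if a < x then F (x - a) else if x < -a then G (x + a) else 0

section corrector

variable {a : ℝ} {F G : ℝ → ℝ}

lemma corrector_right {x : ℝ} (h : a < x) : corrector a F G x = F (x - a) := if_pos h

lemma corrector_left (ha : 0 < a) {x : ℝ} (h : x < -a) : corrector a F G x = G (x + a) := by
  rw [corrector, if_neg (by linarith), if_pos h]

lemma corrector_mid {x : ℝ} (h : x ∈ Ioo (-a) a) : corrector a F G x = 0 := by
  rw [corrector, if_neg h.2.not_gt, if_neg h.1.not_gt]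

lemma corrector_cases {x : ℝ} (h₁ : x ≠ -a) (h₂ : x ≠ a) :
    a < x ∨ x < -a ∨ x ∈ Ioo (-a) a := by
  rcases lt_or_gt_of_ne h₁ with h | h
  · exact Or.inr (Or.inl h)
  · rcases lt_or_gt_of_ne h₂ with h' | h'
    · exact Or.inr (Or.inr ⟨h, h'⟩)
    · exact Or.inl h'

lemma corrector_eventually_right {x : ℝ} (h : a < x) :
    corrector a F G =ᶠ[𝓝 x] fun y => F (y - a) := by
  filter_upwards [Ioi_mem_nhds h] with y hy using corrector_right hy

lemma corrector_eventually_left (ha : 0 < a) {x : ℝ} (h : x < -a) :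
    corrector a F G =ᶠ[𝓝 x] fun y => G (y + a) := by
  filter_upwards [Iio_mem_nhds h] with y hy using corrector_left ha hy

lemma corrector_eventually_mid {x : ℝ} (h : x ∈ Ioo (-a) a) :
    corrector a F G =ᶠ[𝓝 x] fun _ => 0 := by
  filter_upwards [Ioo_mem_nhds h.1 h.2] with y hy using corrector_mid hy

lemma corrector_hasDerivAt (ha : 0 < a) (hF : Differentiable ℝ F) (hG : Differentiable ℝ G)
    {x : ℝ} (h₁ : x ≠ -a) (h₂ : x ≠ a) :
    HasDerivAt (corrector a F G) (corrector a (deriv F) (deriv G) x) x := by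
  rcases corrector_cases h₁ h₂ with h | h | h
  · rw [corrector_right h]
    exact ((hF _).hasDerivAt.comp_sub_const x a).congr_of_eventuallyEq
      (corrector_eventually_right h)
  · rw [corrector_left ha h]
    exact ((hG _).hasDerivAt.comp_add_const x a).congr_of_eventuallyEq
      (corrector_eventually_left ha h)
  · rw [corrector_mid h]
    exact (hasDerivAt_const x 0).congr_of_eventuallyEq (corrector_eventually_mid h)

lemma corrector_contDiffOn (ha : 0 < a) (hF : ContDiff ℝ (⊤ : ℕ∞) F)
    (hG : ContDiff ℝ (⊤ : ℕ∞) G) :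
    ContDiffOn ℝ (⊤ : ℕ∞) (corrector a F G) ({-a, a} : Set ℝ)ᶜ := by
  intro x hx
  simp only [mem_compl_iff, mem_insert_iff, mem_singleton_iff, not_or] at hx
  refine ContDiffAt.contDiffWithinAt ?_
  rcases corrector_cases hx.1 hx.2 with h | h | h
  · exact (hF.comp (contDiff_id.sub contDiff_const)).contDiffAt.congr_of_eventuallyEq
      (corrector_eventually_right h)
  · exact (hG.comp (contDiff_id.add contDiff_const)).contDiffAt.congr_of_eventuallyEq
      (corrector_eventually_left ha h)
  · exact contDiffAt_const.congr_of_eventuallyEq (corrector_eventually_mid h)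

lemma corrector_hasCompactSupport (ha : 0 < a) (hF : HasCompactSupport F)
    (hG : HasCompactSupport G) : HasCompactSupport (corrector a F G) := by
  have h₁ : HasCompactSupport fun x => F (x - a) := by
    simpa [sub_eq_add_neg, Function.comp_def] using
      hF.comp_homeomorph (Homeomorph.addRight (-a))
  have h₂ : HasCompactSupport fun x => G (x + a) := hG.comp_homeomorph (Homeomorph.addRight a)
  refine HasCompactSupport.of_support_subset_isCompact (h₁.isCompact.union h₂.isCompact) ?_
  intro x hx
  rw [Function.mem_support] at hx
  by_cases h : a < x
  · rw [corrector_right h] at hx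
    exact Or.inl (subset_closure hx)
  · by_cases h' : x < -a
    · rw [corrector_left ha h'] at hx
      exact Or.inr (subset_closure hx)
    · exact absurd (by rw [corrector, if_neg h, if_neg h']) hx

lemma corrector_bound {M N : ℝ} (hM : 0 ≤ M) (hN : 0 ≤ N) (hF : ∀ x, |F x| ≤ M)
    (hG : ∀ x, |G x| ≤ N) (x : ℝ) : |corrector a F G x| ≤ M + N := by
  unfold corrector
  split_ifs
  · linarith [hF (x - a)]
  · linarith [hG (x + a)]
  · simpa using add_nonneg hM hN

/-- Addition of the corrector removes the jump of `u` at `a` when `F 0` is minus that jump. -/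
lemma corrector_jump_right (ha : 0 < a) (hF : Continuous F) {u : ℝ → ℝ} {l m : ℝ}
    (hl : Tendsto u (𝓝[<] a) (𝓝 l)) (hm : Tendsto u (𝓝[>] a) (𝓝 m)) (h0 : F 0 = l - m) :
    ∃ A : ℝ, Tendsto (fun x => u x + corrector a F G x) (𝓝[<] a) (𝓝 A) ∧
      Tendsto (fun x => u x + corrector a F G x) (𝓝[>] a) (𝓝 A) := by
  refine ⟨l, ?_, ?_⟩
  · refine hl.congr' ?_
    filter_upwards [Ioo_mem_nhdsLT (show -a < a by linarith)] with x hx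
    rw [corrector_mid hx, add_zero]
  · have h : Tendsto (fun x => F (x - a)) (𝓝[>] a) (𝓝 (l - m)) := by
      have h' : Continuous fun x => F (x - a) := by fun_prop
      simpa [h0] using (h'.tendsto a).mono_left nhdsWithin_le_nhds
    have h' := hm.add h
    rw [add_sub_cancel] at h'
    refine h'.congr' ?_
    filter_upwards [self_mem_nhdsWithin] with x hx
    rw [corrector_right hx]

/-- Addition of the corrector removes the jump of `u` at `-a` when `G 0` is that jump. -/
lemma corrector_jump_left (ha : 0 < a) (hG : Continuous G) {u : ℝ → ℝ} {l m : ℝ}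
    (hl : Tendsto u (𝓝[<] (-a)) (𝓝 l)) (hm : Tendsto u (𝓝[>] (-a)) (𝓝 m))
    (h0 : G 0 = m - l) :
    ∃ A : ℝ, Tendsto (fun x => u x + corrector a F G x) (𝓝[<] (-a)) (𝓝 A) ∧
      Tendsto (fun x => u x + corrector a F G x) (𝓝[>] (-a)) (𝓝 A) := by
  refine ⟨m, ?_, ?_⟩
  · have h : Tendsto (fun x => G (x + a)) (𝓝[<] (-a)) (𝓝 (m - l)) := by
      have h' : Continuous fun x => G (x + a) := by fun_prop
      simpa [h0] using (h'.tendsto (-a)).mono_left nhdsWithin_le_nhds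
    have h' := hl.add h
    rw [add_sub_cancel] at h'
    refine h'.congr' ?_
    filter_upwards [self_mem_nhdsWithin] with x hx
    rw [corrector_left ha hx]
  · refine hm.congr' ?_
    filter_upwards [Ioo_mem_nhdsGT (show -a < a by linarith)] with x hx
    rw [corrector_mid hx, add_zero]

end corrector

/-- There is a universal constant `C > 0` such that: for every `a > 0` and every
function `w : ℝ ∖ {−a, a} → ℝ` which is continuously differentiable off `{−a, a}` (with
derivative `w'`) and whose one-sided limits (of `w` and `w'`) at `−a` and `a` exist and are
finite, there is a corrector `r` (with derivatives `r'`, `r''`) such that: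
(i) `r ≡ 0` on `(−a, a)`; (ii) `r` is `C^∞` off `{−a, a}` and compactly supported;
(iii) `w + r` and `w' + r'` have equal one-sided limits at `−a` and at `a` (no jumps);
(iv) `|r^{(k)}| ≤ C (|[w]_{−a}| + |[w]_{a}| + |[w']_{−a}| + |[w']_{a}|)` for `k = 0, 1, 2`,
with `C` independent of `w` and of `a`.  Here `[g]_b = g(b+0) − g(b−0)`. -/
theorem statement3 :
    ∃ C > 0, ∀ a : ℝ, 0 < a → ∀ w w' : ℝ → ℝ,
      ∀ wLm wRm wLp wRp dLm dRm dLp dRp : ℝ,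
      (∀ x, x ≠ -a → x ≠ a → HasDerivAt w (w' x) x) →
      (∀ x, x ≠ -a → x ≠ a → ContinuousAt w' x) →
      Tendsto w (𝓝[<] (-a)) (𝓝 wLm) → Tendsto w (𝓝[>] (-a)) (𝓝 wRm) →
      Tendsto w (𝓝[<] a) (𝓝 wLp) → Tendsto w (𝓝[>] a) (𝓝 wRp) →
      Tendsto w' (𝓝[<] (-a)) (𝓝 dLm) → Tendsto w' (𝓝[>] (-a)) (𝓝 dRm) →
      Tendsto w' (𝓝[<] a) (𝓝 dLp) → Tendsto w' (𝓝[>] a) (𝓝 dRp) →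
      ∃ r r' r'' : ℝ → ℝ,
        (∀ x ∈ Ioo (-a) a, r x = 0) ∧
        ContDiffOn ℝ (⊤ : ℕ∞) r ({-a, a} : Set ℝ)ᶜ ∧
        HasCompactSupport r ∧
        (∀ x, x ≠ -a → x ≠ a → HasDerivAt r (r' x) x) ∧
        (∀ x, x ≠ -a → x ≠ a → HasDerivAt r' (r'' x) x) ∧
        (∃ A : ℝ, Tendsto (fun x => w x + r x) (𝓝[<] (-a)) (𝓝 A) ∧
                  Tendsto (fun x => w x + r x) (𝓝[>] (-a)) (𝓝 A)) ∧
        (∃ A : ℝ, Tendsto (fun x => w x + r x) (𝓝[<] a) (𝓝 A) ∧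
                  Tendsto (fun x => w x + r x) (𝓝[>] a) (𝓝 A)) ∧
        (∃ B : ℝ, Tendsto (fun x => w' x + r' x) (𝓝[<] (-a)) (𝓝 B) ∧
                  Tendsto (fun x => w' x + r' x) (𝓝[>] (-a)) (𝓝 B)) ∧
        (∃ B : ℝ, Tendsto (fun x => w' x + r' x) (𝓝[<] a) (𝓝 B) ∧
                  Tendsto (fun x => w' x + r' x) (𝓝[>] a) (𝓝 B)) ∧
        (∀ x, x ≠ -a → x ≠ a →
          |r x| ≤ C * (|wRm - wLm| + |wRp - wLp| + |dRm - dLm| + |dRp - dLp|) ∧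
          |r' x| ≤ C * (|wRm - wLm| + |wRp - wLp| + |dRm - dLm| + |dRp - dLp|) ∧
          |r'' x| ≤ C * (|wRm - wLm| + |wRp - wLp| + |dRm - dLm| + |dRp - dLp|)) := by
  obtain ⟨K, hK, prof⟩ := exists_profile
  refine ⟨K, hK, ?_⟩
  intro a ha w w' wLm wRm wLp wRp dLm dRm dLp dRp _ _ hLm hRm hLp hRp hdLm hdRm hdLp hdRp
  obtain ⟨F, hF, hFc, hF0, hF1, hFb⟩ := prof (wLp - wRp) (dLp - dRp)
  obtain ⟨G, hG, hGc, hG0, hG1, hGb⟩ := prof (wRm - wLm) (dRm - dLm)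
  have hF' : ContDiff ℝ (⊤ : ℕ∞) (deriv F) := (contDiff_infty_iff_deriv.1 hF).2
  have hG' : ContDiff ℝ (⊤ : ℕ∞) (deriv G) := (contDiff_infty_iff_deriv.1 hG).2
  have diff : ∀ {h : ℝ → ℝ}, ContDiff ℝ (⊤ : ℕ∞) h → Differentiable ℝ h :=
    fun h => h.differentiable (by simp)
  have hsum : K * (|wRm - wLm| + |wRp - wLp| + |dRm - dLm| + |dRp - dLp|) =
      K * (|wLp - wRp| + |dLp - dRp|) + K * (|wRm - wLm| + |dRm - dLm|) := by
    rw [abs_sub_comm wLp, abs_sub_comm dLp]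
    ring
  refine ⟨corrector a F G, corrector a (deriv F) (deriv G),
    corrector a (deriv (deriv F)) (deriv (deriv G)), fun x hx => corrector_mid hx,
    corrector_contDiffOn ha hF hG, corrector_hasCompactSupport ha hFc hGc,
    fun x => corrector_hasDerivAt ha (diff hF) (diff hG),
    fun x => corrector_hasDerivAt ha (diff hF') (diff hG'),
    corrector_jump_left ha hG.continuous hLm hRm hG0,
    corrector_jump_right ha hF.continuous hLp hRp hF0,
    corrector_jump_left ha hG'.continuous hdLm hdRm hG1,
    corrector_jump_right ha hF'.continuous hdLp hdRp hF1, fun x _ _ => ?_⟩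
  rw [hsum]
  have hM : 0 ≤ K * (|wLp - wRp| + |dLp - dRp|) := by positivity
  have hN : 0 ≤ K * (|wRm - wLm| + |dRm - dLm|) := by positivity
  exact ⟨corrector_bound hM hN (fun y => (hFb y).1) (fun y => (hGb y).1) x,
    corrector_bound hM hN (fun y => (hFb y).2.1) (fun y => (hGb y).2.1) x,
    corrector_bound hM hN (fun y => (hFb y).2.2) (fun y => (hGb y).2.2) x⟩
end

section
/- Let Φ ∈ 𝒫 and α ∈ ℝ. The following are equivalent: (i) there exists a nonzero bounded continuously differentiable function u : ℝ → ℝ with absolutely continuous derivative satisfying u''(t) = α Φ(t) u(t) for almost every t ∈ ℝ (i.e., α Φ possesses a half-bound state); (ii) there exists a nonzero continuously differentiable function u : [−1, 1] → ℝ with absolutely continuous derivative satisfying u''(t) = α Φ(t) u(t) for almost every t ∈ [−1, 1] together with the Neumann boundary conditions u'(−1) = 0 and u'(1) = 0. -/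
open MeasureTheory Set

/-!
Outside `[-1, 1]` the potential vanishes, so there a solution on the line has locally constant
derivative: with `clampI` the nearest-point retraction onto `[-1, 1]`,
`u' t = u' (clampI t)` and `u t = u (clampI t) + u' (clampI t) * (t - clampI t)`.
Boundedness of `u` therefore forces `u' (±1) = 0`, and then `u = u ∘ clampI`, so that `u` cannot
vanish identically on `[-1, 1]`. No uniqueness theorem for the equation is needed.

Conversely, a Neumann solution `u` on `[-1, 1]` extends to the line by `u ∘ clampI`, with derivative
`u' ∘ clampI` (which vanishes outside `[-1, 1]`) and second derivative `α Φ (u ∘ clampI)`.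
Both integral identities for the extension follow from `integral_clampI`: the integral of a function
vanishing a.e. outside `[-1, 1]` is unchanged when the endpoints are clamped.
-/

/-- The nearest-point retraction of `ℝ` onto `[-1, 1]`. -/
noncomputable def clampI (t : ℝ) : ℝ := max (-1) (min 1 t)

lemma clampI_mem (t : ℝ) : clampI t ∈ Icc (-1 : ℝ) 1 := by
  unfold clampI
  exact ⟨le_max_left _ _, max_le (by norm_num) (min_le_left _ _)⟩

lemma clampI_of_mem {t : ℝ} (h : t ∈ Icc (-1 : ℝ) 1) : clampI t = t := by
  unfold clampI
  rw [min_eq_right h.2, max_eq_right h.1]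

lemma clampI_of_ge {t : ℝ} (h : 1 ≤ t) : clampI t = 1 := by
  unfold clampI
  rw [min_eq_left h, max_eq_right (by norm_num)]

lemma clampI_of_le {t : ℝ} (h : t ≤ -1) : clampI t = -1 := by
  unfold clampI
  rw [min_eq_right (by linarith), max_eq_left h]

lemma continuous_clampI : Continuous clampI := by
  unfold clampI
  fun_prop

/-- The retraction is constant on the segment joining a point to its image. -/
lemma clampI_eq_of_mem_uIcc {t x : ℝ} (hx : x ∈ uIcc (clampI t) t) : clampI x = clampI t := by
  rcases le_total t (-1) with h | h
  · rw [clampI_of_le h, uIcc_of_ge h] at hx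
    rw [clampI_of_le h, clampI_of_le hx.2]
  rcases le_total 1 t with h' | h'
  · rw [clampI_of_ge h', uIcc_of_le h'] at hx
    rw [clampI_of_ge h', clampI_of_ge hx.1]
  · rw [clampI_of_mem ⟨h, h'⟩, uIcc_self, mem_singleton_iff] at hx
    rw [hx]

lemma integral_clampI_self {g : ℝ → ℝ} (hg : ∀ᵐ x, x ∉ Icc (-1 : ℝ) 1 → g x = 0) (t : ℝ) :
    ∫ x in (clampI t)..t, g x = 0 := by
  apply intervalIntegral.integral_zero_ae
  -- The half-open segment may contain an endpoint of `[-1, 1]`, where `g` need not vanish.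
  filter_upwards [hg, Measure.ae_ne volume (-1 : ℝ), Measure.ae_ne volume (1 : ℝ)]
    with x hx hx1 hx2 hxt
  apply hx
  intro hmem
  have hc := clampI_eq_of_mem_uIcc (uIoc_subset_uIcc hxt)
  rw [clampI_of_mem hmem] at hc
  rcases le_total t (-1) with h | h
  · exact hx1 (hc.trans (clampI_of_le h))
  rcases le_total 1 t with h' | h'
  · exact hx2 (hc.trans (clampI_of_ge h'))
  · rw [clampI_of_mem ⟨h, h'⟩] at hxt
    simp at hxt

lemma integral_clampI {g : ℝ → ℝ} (hg : ∀ᵐ x, x ∉ Icc (-1 : ℝ) 1 → g x = 0)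
    (hi : ∀ a b, IntervalIntegrable g volume a b) (s t : ℝ) :
    ∫ x in s..t, g x = ∫ x in (clampI s)..(clampI t), g x := by
  have h1 := intervalIntegral.integral_add_adjacent_intervals (hi (clampI s) s) (hi s t)
  have h2 := intervalIntegral.integral_add_adjacent_intervals
    (hi (clampI s) (clampI t)) (hi (clampI t) t)
  rw [integral_clampI_self hg] at h1 h2
  linarith

/-- A real number whose multiples by all nonnegative reals are bounded is zero. -/
lemma eq_zero_of_mul_bounded {c C : ℝ} (h : ∀ r : ℝ, 0 ≤ r → |c * r| ≤ C) : c = 0 := by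
  by_contra hc
  have hpos : 0 < |c| := abs_pos.mpr hc
  have hC : 0 ≤ C := (abs_nonneg _).trans (h 0 le_rfl)
  have h1 := h ((C + 1) / |c|) (by positivity)
  rw [abs_mul, abs_of_nonneg (show 0 ≤ (C + 1) / |c| by positivity),
    mul_div_cancel₀ _ hpos.ne'] at h1
  linarith

/-- For `Φ ∈ 𝒫` and `α ∈ ℝ` the following are equivalent:
(i) there is a nonzero bounded `C¹` function `u : ℝ → ℝ` with absolutely continuous derivative
satisfying `u'' = α Φ u` a.e. on `ℝ` (a half-bound state for `α Φ`);
(ii) there is a nonzero `C¹` function `u : [−1, 1] → ℝ` with absolutely continuous derivative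
satisfying `u'' = α Φ u` a.e. on `[−1, 1]` together with the Neumann conditions
`u'(−1) = 0` and `u'(1) = 0`. -/
theorem statement6
    (Φ : ℝ → ℝ) (hΦmeas : Measurable Φ) (MΦ : ℝ) (hΦbd : ∀ t, |Φ t| ≤ MΦ)
    (hΦsupp : ∀ t, t ∉ Icc (-1:ℝ) 1 → Φ t = 0) (α : ℝ) :
    (∃ u u' u'' : ℝ → ℝ,
      (∃ t, u t ≠ 0) ∧
      (∃ K, ∀ t, |u t| ≤ K) ∧
      (∀ t, HasDerivAt u (u' t) t) ∧
      Continuous u' ∧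
      (∀ s t : ℝ, u' t - u' s = ∫ x in s..t, u'' x) ∧
      (∀ᵐ t : ℝ ∂volume, u'' t = α * Φ t * u t))
    ↔
    (∃ u u' u'' : ℝ → ℝ,
      (∃ t ∈ Icc (-1:ℝ) 1, u t ≠ 0) ∧
      (∀ t ∈ Icc (-1:ℝ) 1, HasDerivWithinAt u (u' t) (Icc (-1:ℝ) 1) t) ∧
      ContinuousOn u' (Icc (-1:ℝ) 1) ∧
      (∀ s ∈ Icc (-1:ℝ) 1, ∀ t ∈ Icc (-1:ℝ) 1, u' t - u' s = ∫ x in s..t, u'' x) ∧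
      (∀ᵐ t ∂(volume.restrict (Icc (-1:ℝ) 1)), u'' t = α * Φ t * u t) ∧
      u' (-1) = 0 ∧ u' 1 = 0) := by
  constructor
  · rintro ⟨u, u', u'', ⟨t₀, ht₀⟩, ⟨K, hK⟩, hd, hc, hint, hode⟩
    have hz : ∀ᵐ x, x ∉ Icc (-1 : ℝ) 1 → u'' x = 0 := by
      filter_upwards [hode] with x hx hx'
      rw [hx, hΦsupp x hx', mul_zero, zero_mul]
    have hu' (t : ℝ) : u' t = u' (clampI t) := by
      have := hint (clampI t) t
      rw [integral_clampI_self hz] at this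
      linarith
    have hu (t : ℝ) : u t - u (clampI t) = u' (clampI t) * (t - clampI t) := by
      rw [← intervalIntegral.integral_eq_sub_of_hasDerivAt (fun x _ => hd x)
        (hc.intervalIntegrable _ _)]
      have : ∫ x in (clampI t)..t, u' x = ∫ _ in (clampI t)..t, u' (clampI t) := by
        apply intervalIntegral.integral_congr
        intro x hx
        rw [hu' x, clampI_eq_of_mem_uIcc hx]
      rw [this, intervalIntegral.integral_const, smul_eq_mul, mul_comm]
    have hb (s t : ℝ) : |u s - u t| ≤ K + K :=
      (abs_sub _ _).trans (add_le_add (hK s) (hK t))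
    have hr : u' 1 = 0 := by
      apply eq_zero_of_mul_bounded (C := K + K)
      intro r hr
      have h1 := hu (1 + r)
      rw [clampI_of_ge (by linarith), add_sub_cancel_left] at h1
      rw [← h1]
      exact hb _ _
    have hl : u' (-1) = 0 := by
      apply eq_zero_of_mul_bounded (C := K + K)
      intro r hr
      have h1 := hu (-1 - r)
      rw [clampI_of_le (by linarith), show -1 - r - -1 = -r by ring, mul_neg] at h1
      rw [← abs_neg, ← h1]
      exact hb _ _
    refine ⟨u, u', u'', ⟨clampI t₀, clampI_mem t₀, ?_⟩, fun t _ => (hd t).hasDerivWithinAt,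
      hc.continuousOn, fun s _ t _ => hint s t, ae_restrict_of_ae hode, hl, hr⟩
    have h0 : u' (clampI t₀) * (t₀ - clampI t₀) = 0 := by
      rcases le_total t₀ (-1) with h | h
      · rw [clampI_of_le h, hl, zero_mul]
      rcases le_total 1 t₀ with h' | h'
      · rw [clampI_of_ge h', hr, zero_mul]
      · rw [clampI_of_mem ⟨h, h'⟩, sub_self, mul_zero]
    have h1 := hu t₀
    rw [h0, sub_eq_zero] at h1
    rwa [← h1]
  · rintro ⟨u, u', u'', ⟨t₀, ht₀, hne⟩, hd, hc, hint, hode, hl, hr⟩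
    have hucont : ContinuousOn u (Icc (-1 : ℝ) 1) := fun t ht => (hd t ht).continuousWithinAt
    have hv : Continuous (fun t => u (clampI t)) :=
      hucont.comp_continuous continuous_clampI clampI_mem
    have hw : Continuous (fun t => u' (clampI t)) :=
      hc.comp_continuous continuous_clampI clampI_mem
    have hwz : ∀ x, x ∉ Icc (-1 : ℝ) 1 → u' (clampI x) = 0 := by
      intro x hx
      rcases le_total x (-1) with h | h
      · rw [clampI_of_le h, hl]
      rcases le_total 1 x with h' | h'
      · rw [clampI_of_ge h', hr]
      · exact absurd ⟨h, h'⟩ hx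
    have hsub (s t : ℝ) : uIcc (clampI s) (clampI t) ⊆ Icc (-1 : ℝ) 1 :=
      uIcc_subset_Icc (clampI_mem s) (clampI_mem t)
    have hprim (t : ℝ) : u (clampI t) = u (-1) + ∫ x in (-1)..t, u' (clampI x) := by
      rw [integral_clampI (ae_of_all _ hwz) (fun a b => hw.intervalIntegrable a b),
        clampI_of_le le_rfl]
      have hcl : -1 ≤ clampI t := (clampI_mem t).1
      rw [intervalIntegral.integral_eq_sub_of_hasDerivAt_of_le hcl (f := u)]
      · ring
      · exact hucont.mono (Icc_subset_Icc_right (clampI_mem t).2)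
      · intro x hx
        have hx1 : x < 1 := hx.2.trans_le (clampI_mem t).2
        have hmem : x ∈ Icc (-1 : ℝ) 1 := ⟨hx.1.le, hx1.le⟩
        rw [clampI_of_mem hmem]
        exact (hd x hmem).hasDerivAt (Icc_mem_nhds hx.1 hx1)
      · exact hw.intervalIntegrable _ _
    have hgi (a b : ℝ) :
        IntervalIntegrable (fun t => α * Φ t * u (clampI t)) volume a b := by
      have hΦi : IntervalIntegrable (fun t => α * Φ t) volume a b := by
        apply IntervalIntegrable.const_mul
        refine (intervalIntegrable_const (c := MΦ)).mono_fun hΦmeas.aestronglyMeasurable ?_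
        exact ae_of_all _ fun x => (hΦbd x).trans (le_abs_self _)
      exact hΦi.mul_continuousOn hv.continuousOn
    have hgz : ∀ x, x ∉ Icc (-1 : ℝ) 1 → α * Φ x * u (clampI x) = 0 := by
      intro x hx
      rw [hΦsupp x hx, mul_zero, zero_mul]
    refine ⟨fun t => u (clampI t), fun t => u' (clampI t), fun t => α * Φ t * u (clampI t),
      ⟨t₀, ?_⟩, ?_, ?_, hw, ?_, ae_of_all _ fun _ => rfl⟩
    · change u (clampI t₀) ≠ 0
      rwa [clampI_of_mem ht₀]
    · obtain ⟨K, hK⟩ := isCompact_Icc.exists_bound_of_continuousOn hucont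
      exact ⟨K, fun t => hK _ (clampI_mem t)⟩
    · intro t
      rw [funext hprim]
      exact (intervalIntegral.integral_hasDerivAt_right (hw.intervalIntegrable _ _)
        hw.stronglyMeasurable.stronglyMeasurableAtFilter hw.continuousAt).const_add _
    · intro s t
      rw [integral_clampI (ae_of_all _ hgz) hgi, hint _ (clampI_mem s) _ (clampI_mem t)]
      apply intervalIntegral.integral_congr_ae
      rw [ae_restrict_iff' measurableSet_Icc] at hode
      filter_upwards [hode] with x hx hxm
      have hmem : x ∈ Icc (-1 : ℝ) 1 := hsub s t (uIoc_subset_uIcc hxm)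
      rw [hx hmem, clampI_of_mem hmem]
end

section
/- Let Φ ∈ 𝒫 and α ∈ ℝ. There exists a constant C > 0, depending only on α and Φ, with the following property. Let M > 0, let h : ℝ → ℝ be measurable with |h(τ)| ≤ M τ² for all τ ∈ ℝ, let c ∈ ℝ and η ≥ 1, and let g : ℝ → ℝ be continuously differentiable with absolutely continuous derivative satisfying g''(t) − α Φ(t) g(t) = c η Φ(t) h(t/η) for almost every t ∈ ℝ, with g(−1) = a and g'(−1) = b. Then |g'(t)| ≤ C (|a| + |b| + |c| M η^{−1}) for all t ∈ ℝ, and |g(t)| ≤ C (|a| + |b| + |c| M η^{−1})(1 + |t|) for all t ∈ ℝ. -/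
open MeasureTheory Set

/-!
With `E = |c| M / η`, the equation gives `|g''| ≤ |α| MΦ |g| + MΦ E` a.e., because `Φ` lives on
`[-1, 1]`, where `|c η h (t / η)| ≤ |c| M t² / η ≤ E`. Hence `u = |g| + |g'| + E` satisfies
`u t ≤ S + ∫_{-1}^t L u` on `[-1, 1]`, where `S = |a| + |b| + E` and `L` depends only on `α` and
the bound `MΦ`, and Grönwall's inequality in integral form (`le_mul_exp_of_le_integral`) yields
`u ≤ S exp (2 L)` there. Outside `[-1, 1]` the function `g''` vanishes a.e., so `g'` is constant on
each side and the bound for `g'` is global; the mean value inequality then bounds `g` linearly.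
-/

/-- Integral form of Grönwall's inequality on an interval, for a continuous nonnegative function:
the right-hand side `U` of the hypothesis satisfies `U' = L u ≤ L U`. -/
theorem le_mul_exp_of_le_integral {u : ℝ → ℝ} (hu : Continuous u) (hu0 : ∀ t, 0 ≤ u t)
    {S L p q : ℝ} (hS : 0 ≤ S) (hL : 0 ≤ L)
    (h : ∀ t ∈ Icc p q, u t ≤ S + ∫ x in p..t, L * u x) :
    ∀ t ∈ Icc p q, u t ≤ S * Real.exp (L * (t - p)) := by
  intro t ht
  have hd : ∀ x, HasDerivAt (fun t => S + ∫ x in p..t, L * u x) (L * u x) x := by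
    intro x
    have hc : Continuous fun x => L * u x := by fun_prop
    exact (hc.integral_hasStrictDerivAt p x).hasDerivAt.const_add S
  have key := norm_le_gronwallBound_of_norm_deriv_right_le
    (f := fun t => S + ∫ x in p..t, L * u x) (f' := fun x => L * u x) (δ := S) (K := L) (ε := 0)
    (a := p) (b := q)
    (fun x _ => (hd x).continuousAt.continuousWithinAt)
    (fun x _ => (hd x).hasDerivWithinAt)
    (by simp [abs_of_nonneg hS])
    (fun x hx => by
      rw [Real.norm_of_nonneg (mul_nonneg hL (hu0 x)), add_zero]
      exact mul_le_mul_of_nonneg_left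
        ((h x (Ico_subset_Icc_self hx)).trans (le_abs_self _)) hL) t ht
  rw [gronwallBound_ε0] at key
  exact (h t ht).trans ((le_abs_self _).trans key)

/-- Let `Φ ∈ 𝒫` and `α ∈ ℝ`.  There is `C > 0`, depending only on `α` and `Φ`,
such that: for every `M > 0`, every measurable `h` with `|h(τ)| ≤ M τ²`, every `c ∈ ℝ`, `η ≥ 1`,
and every `C¹` function `g : ℝ → ℝ` with absolutely continuous derivative satisfying
`g'' − α Φ g = c η Φ(t) h(t/η)` a.e. on `ℝ` with `g(−1) = a`, `g'(−1) = b`, one has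
`|g'(t)| ≤ C (|a| + |b| + |c| M η⁻¹)` and `|g(t)| ≤ C (|a| + |b| + |c| M η⁻¹)(1 + |t|)`
for all `t ∈ ℝ`. -/
theorem statement10
    (α : ℝ) (Φ : ℝ → ℝ) (hΦmeas : Measurable Φ) (MΦ : ℝ) (hΦbd : ∀ t, |Φ t| ≤ MΦ)
    (hΦsupp : ∀ t, t ∉ Icc (-1:ℝ) 1 → Φ t = 0) :
    ∃ C > 0, ∀ M : ℝ, 0 < M → ∀ h : ℝ → ℝ, Measurable h →
      (∀ τ : ℝ, |h τ| ≤ M * τ ^ 2) →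
      ∀ c η a b : ℝ, 1 ≤ η →
      ∀ g g' g'' : ℝ → ℝ,
        (∀ t, HasDerivAt g (g' t) t) →
        Continuous g' →
        (∀ s t : ℝ, g' t - g' s = ∫ x in s..t, g'' x) →
        (∀ᵐ t : ℝ ∂volume, g'' t - α * Φ t * g t = c * η * Φ t * h (t / η)) →
        g (-1) = a → g' (-1) = b →
        (∀ t : ℝ, |g' t| ≤ C * (|a| + |b| + |c| * M / η)) ∧
        (∀ t : ℝ, |g t| ≤ C * (|a| + |b| + |c| * M / η) * (1 + |t|)) := by
  have hMΦ : 0 ≤ MΦ := (abs_nonneg _).trans (hΦbd 0)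
  set L : ℝ := (|α| + 1) * MΦ + 1 with hLdef
  have hL : 0 ≤ L := by positivity
  refine ⟨2 * Real.exp (L * 2), by positivity, ?_⟩
  intro M hM h _ hh c η a b hη g g' g'' hg hg' hint hode ha hb
  have hη0 : 0 < η := by linarith
  set E : ℝ := |c| * M / η with hE
  have hE0 : 0 ≤ E := by positivity
  set S : ℝ := |a| + |b| + E with hSdef
  have hS : 0 ≤ S := by positivity
  have hgc : Continuous g := continuous_iff_continuousAt.2 fun t => (hg t).continuousAt
  have hbd : ∀ᵐ t : ℝ ∂volume, |g'' t| ≤ |α| * MΦ * |g t| + MΦ * E := by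
    filter_upwards [hode] with t ht
    have e : g'' t = α * Φ t * g t + Φ t * (c * η * h (t / η)) := by linarith
    have h1 : |α * Φ t * g t| ≤ |α| * MΦ * |g t| := by
      rw [abs_mul, abs_mul]
      gcongr
      exact hΦbd t
    have h2 : |Φ t * (c * η * h (t / η))| ≤ MΦ * E := by
      by_cases hI : t ∈ Icc (-1 : ℝ) 1
      · rw [abs_mul]
        refine mul_le_mul (hΦbd t) ?_ (abs_nonneg _) hMΦ
        rw [abs_mul, abs_mul, abs_of_pos hη0]
        have ht2 : t ^ 2 ≤ 1 := by nlinarith [hI.1, hI.2]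
        calc |c| * η * |h (t / η)| ≤ |c| * η * (M * (t / η) ^ 2) := by
              gcongr
              exact hh _
          _ = E * t ^ 2 := by rw [hE]; field_simp
          _ ≤ E := mul_le_of_le_one_right hE0 ht2
      · rw [hΦsupp t hI]
        simp only [zero_mul, abs_zero]
        positivity
    rw [e]
    exact (abs_add_le _ _).trans (add_le_add h1 h2)
  have hout : ∀ᵐ t : ℝ ∂volume, t ∉ Icc (-1 : ℝ) 1 → g'' t = 0 := by
    filter_upwards [hode] with t ht hI
    rw [hΦsupp t hI] at ht
    linarith
  have hgint : ∀ t, g t - g (-1) = ∫ x in (-1 : ℝ)..t, g' x := fun t =>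
    (intervalIntegral.integral_eq_sub_of_hasDerivAt (fun x _ => hg x)
      (hg'.intervalIntegrable _ _)).symm
  have hin : ∀ t ∈ Icc (-1 : ℝ) 1, |g t| + |g' t| + E ≤ S * Real.exp (L * (t - -1)) := by
    refine le_mul_exp_of_le_integral (u := fun t => |g t| + |g' t| + E) (by fun_prop)
      (fun t => by positivity) hS hL ?_
    intro t ht
    have i1 : |g t - g (-1)| ≤ ∫ x in (-1 : ℝ)..t, |g' x| := by
      rw [hgint]
      exact intervalIntegral.abs_integral_le_integral_abs ht.1
    have i2 : |g' t - g' (-1)| ≤ ∫ x in (-1 : ℝ)..t, (|α| * MΦ * |g x| + MΦ * E) := by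
      have c2 : Continuous fun x => |α| * MΦ * |g x| + MΦ * E := by fun_prop
      rw [hint, ← Real.norm_eq_abs]
      refine intervalIntegral.norm_integral_le_of_norm_le ht.1 ?_ (c2.intervalIntegrable _ _)
      filter_upwards [hbd] with x hx _ using hx
    have i3 : (∫ x in (-1 : ℝ)..t, |g' x|) + ∫ x in (-1 : ℝ)..t, (|α| * MΦ * |g x| + MΦ * E)
        ≤ ∫ x in (-1 : ℝ)..t, L * (|g x| + |g' x| + E) := by
      have c1 : Continuous fun x => |g' x| := by fun_prop
      have c2 : Continuous fun x => |α| * MΦ * |g x| + MΦ * E := by fun_prop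
      rw [← intervalIntegral.integral_add (c1.intervalIntegrable _ _) (c2.intervalIntegrable _ _)]
      refine intervalIntegral.integral_mono_on ht.1
        (Continuous.intervalIntegrable (by fun_prop) _ _)
        (Continuous.intervalIntegrable (by fun_prop) _ _) fun x _ => ?_
      have p0 : 0 ≤ |α| * MΦ := by positivity
      rw [hLdef]
      nlinarith [mul_nonneg p0 (abs_nonneg (g' x)), mul_nonneg p0 hE0,
        mul_nonneg hMΦ (abs_nonneg (g' x)), mul_nonneg hMΦ (abs_nonneg (g x)),
        abs_nonneg (g x)]
    rw [ha] at i1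
    rw [hb] at i2
    have j1 := abs_sub_abs_le_abs_sub (g t) a
    have j2 := abs_sub_abs_le_abs_sub (g' t) b
    simp only [hSdef]
    linarith
  set D : ℝ := S * Real.exp (L * 2) with hD
  have hSD : S ≤ D := le_mul_of_one_le_right hS (Real.one_le_exp (by positivity))
  have hin' : ∀ t ∈ Icc (-1 : ℝ) 1, |g' t| ≤ D := by
    intro t ht
    have h1 := hin t ht
    have h2 : S * Real.exp (L * (t - -1)) ≤ D := by
      rw [hD]
      gcongr
      linarith [ht.2]
    linarith [abs_nonneg (g t)]
  have hall : ∀ t, |g' t| ≤ D := by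
    intro t
    rcases lt_or_ge t (-1) with h1 | h1
    · have e : g' (-1) - g' t = 0 := by
        rw [hint]
        refine intervalIntegral.integral_zero_ae ?_
        -- the endpoint `-1` belongs to the interval of integration but is a null set
        filter_upwards [hout, compl_mem_ae_iff.2 (measure_singleton (-1 : ℝ))] with x hx hne hxI
        rw [uIoc_of_le h1.le] at hxI
        exact hx fun hxJ => hne (le_antisymm hxI.2 hxJ.1)
      rw [show g' t = g' (-1) by linarith]
      exact hin' _ (by norm_num)
    · rcases le_or_gt t 1 with h2 | h2
      · exact hin' t ⟨h1, h2⟩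
      · have e : g' t - g' 1 = 0 := by
          rw [hint]
          refine intervalIntegral.integral_zero_ae ?_
          filter_upwards [hout] with x hx hxI
          rw [uIoc_of_le h2.le] at hxI
          exact hx fun hxJ => absurd hxI.1 (not_lt.2 hxJ.2)
        rw [show g' t = g' 1 by linarith]
        exact hin' _ (by norm_num)
  have hD0 : 0 ≤ D := hS.trans hSD
  have hC : 2 * Real.exp (L * 2) * S = 2 * D := by rw [hD]; ring
  refine ⟨fun t => ?_, fun t => ?_⟩
  · rw [hC]
    linarith [hall t]
  · rw [hC]
    have m := Convex.norm_image_sub_le_of_norm_hasDerivWithin_le (f := g) (f' := g') (C := D)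
      (s := univ) (x := -1) (y := t) (fun x _ => (hg x).hasDerivWithinAt) (fun x _ => hall x)
      convex_univ (mem_univ _) (mem_univ _)
    rw [Real.norm_eq_abs, Real.norm_eq_abs, ha] at m
    have j1 := abs_sub_abs_le_abs_sub (g t) a
    have j2 : |t - -1| ≤ |t| + 1 := by
      simpa using abs_add_le t 1
    have j3 : D * |t - -1| ≤ D * (|t| + 1) := mul_le_mul_of_nonneg_left j2 hD0
    have j4 : |a| ≤ S := by
      rw [hSdef]
      linarith [abs_nonneg b]
    nlinarith [mul_nonneg hD0 (abs_nonneg t)]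
end

section
/- Let Φ ∈ 𝒫, α ∈ ℝ, and let u : ℝ → ℝ be a bounded continuously differentiable function with absolutely continuous derivative satisfying u'' = α Φ u almost everywhere on ℝ, normalized so that u(t) = 1 for t ≤ −1 and u(t) = θ for t ≥ 1. Let M > 0, let h : ℝ → ℝ be measurable with |h(τ)| ≤ M τ² for all τ, let c ∈ ℝ and η ≥ 1, and let g : [−1, 1] → ℝ be continuously differentiable with absolutely continuous derivative satisfying g''(t) − α Φ(t) g(t) = c η Φ(t) h(t/η) for almost every t ∈ [−1, 1]. Then |θ g'(1) − g'(−1)| ≤ (2/3) |c| M ‖Φ‖_∞ ‖u‖_∞ η^{−1}. -/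
/-!
Multiplying the equation for `g` by `u` and the equation for `u` by `g` and subtracting, the
terms with `α` cancel: the Wronskian `u g' - u' g` is absolutely continuous on `[-1, 1]` with
derivative `c η u(t) Φ(t) h(t/η)` almost everywhere. Since `u` is constant on `(-∞, -1]` and on
`[1, ∞)`, `u'(±1) = 0`, so the Wronskian increases by `θ g'(1) - g'(-1)` across `[-1, 1]`.
Bounding the integrand by `|c| M ‖Φ‖_∞ ‖u‖_∞ η⁻¹ t²` and using `∫ t² = 2/3` gives the claim.

The Wronskian identity is obtained from two integrations by parts (`integral_parts`), for the pairs
`(u, g')` and `(u', g)`; the `u' g'` terms cancel.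
-/

open MeasureTheory Set

/-- Integration by parts for indefinite integrals of interval integrable functions. -/
lemma integral_parts {a b : ℝ} (hab : a ≤ b) {F f P p : ℝ → ℝ}
    (hf : IntervalIntegrable f volume a b) (hp : IntervalIntegrable p volume a b)
    (hF : ∀ t ∈ Icc a b, F t - F a = ∫ x in a..t, f x)
    (hP : ∀ t ∈ Icc a b, P t - P a = ∫ x in a..t, p x) :
    ∫ x in a..b, (f x * P x + F x * p x) = F b * P b - F a * P a := by
  have hac : ∀ (C : ℝ) {q : ℝ → ℝ}, IntervalIntegrable q volume a b →
      AbsolutelyContinuousOnInterval (fun t => C + ∫ x in a..t, q x) a b := by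
    intro C q hq
    have h1 : AbsolutelyContinuousOnInterval (fun _ : ℝ => C) a b :=
      (LipschitzWith.const C).lipschitzOnWith.absolutelyContinuousOnInterval
    exact h1.fun_add (hq.absolutelyContinuousOnInterval_intervalIntegral left_mem_uIcc)
  have key := (hac (F a) hf).integral_deriv_mul_eq_sub (hac (P a) hp)
  have eF : ∀ t ∈ Icc a b, F a + ∫ x in a..t, f x = F t := fun t ht => by
    rw [← hF t ht]; ring
  have eP : ∀ t ∈ Icc a b, P a + ∫ x in a..t, p x = P t := fun t ht => by
    rw [← hP t ht]; ring
  have ha : a ∈ Icc a b := left_mem_Icc.2 hab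
  have hb : b ∈ Icc a b := right_mem_Icc.2 hab
  rw [eF a ha, eF b hb, eP a ha, eP b hb] at key
  rw [← key]
  apply intervalIntegral.integral_congr_ae
  filter_upwards [hf.ae_hasDerivAt_integral, hp.ae_hasDerivAt_integral] with x hx1 hx2 hx
  have hxu : x ∈ uIcc a b := uIoc_subset_uIcc hx
  have hxI : x ∈ Icc a b := by rwa [uIcc_of_le hab] at hxu
  rw [((hx1 hxu a left_mem_uIcc).const_add (F a)).deriv,
    ((hx2 hxu a left_mem_uIcc).const_add (P a)).deriv, eF x hxI, eP x hxI]

/-- The fundamental theorem of calculus for a function that is `C¹` on a closed interval. -/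
lemma sub_eq_integral_of_C1 {a b : ℝ} {F f : ℝ → ℝ}
    (hF : ∀ t ∈ Icc a b, HasDerivWithinAt F (f t) (Icc a b) t)
    (hf : ContinuousOn f (Icc a b)) :
    ∀ t ∈ Icc a b, F t - F a = ∫ x in a..t, f x := by
  intro t ht
  have hsub : Icc a t ⊆ Icc a b := Icc_subset_Icc_right ht.2
  refine (intervalIntegral.integral_eq_sub_of_hasDerivAt_of_le ht.1
    (fun x hx => ((hF x (hsub hx)).continuousWithinAt).mono hsub) (fun x hx => ?_) ?_).symm
  · exact (hF x (hsub (Ioo_subset_Icc_self hx))).hasDerivAt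
      (Icc_mem_nhds hx.1 (hx.2.trans_le ht.2))
  · exact (hf.mono hsub).intervalIntegrable_of_Icc ht.1

/-- Let `Φ ∈ 𝒫`, `α ∈ ℝ`, and let `u` be a bounded `C¹` function with
absolutely continuous derivative satisfying `u'' = α Φ u` a.e. on `ℝ`, normalized so that
`u(t) = 1` for `t ≤ −1` and `u(t) = θ` for `t ≥ 1`.  Let `M > 0`, let `h` be measurable with
`|h(τ)| ≤ M τ²`, let `c ∈ ℝ` and `η ≥ 1`, and let `g : [−1, 1] → ℝ` be `C¹` with absolutely
continuous derivative satisfying `g'' − α Φ g = c η Φ(t) h(t/η)` a.e. on `[−1, 1]`.  Then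
`|θ g'(1) − g'(−1)| ≤ (2/3) |c| M ‖Φ‖_∞ ‖u‖_∞ η⁻¹`. -/
theorem statement11
    (α θ : ℝ) (Φ : ℝ → ℝ) (hΦmeas : Measurable Φ) (MΦ : ℝ) (hΦbd : ∀ t, |Φ t| ≤ MΦ)
    (hΦsupp : ∀ t, t ∉ Icc (-1:ℝ) 1 → Φ t = 0)
    (u u' u'' : ℝ → ℝ) (Mu : ℝ) (hubd : ∀ t, |u t| ≤ Mu)
    (hu : ∀ t, HasDerivAt u (u' t) t)
    (hu'c : Continuous u')
    (huftc : ∀ s t : ℝ, u' t - u' s = ∫ x in s..t, u'' x)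
    (hueq : ∀ᵐ t : ℝ ∂volume, u'' t = α * Φ t * u t)
    (hnorm₁ : ∀ t ≤ (-1:ℝ), u t = 1) (hnorm₂ : ∀ t, (1:ℝ) ≤ t → u t = θ)
    (M : ℝ) (hM : 0 < M) (h : ℝ → ℝ) (hhmeas : Measurable h)
    (hhbd : ∀ τ : ℝ, |h τ| ≤ M * τ ^ 2)
    (c η : ℝ) (hη : 1 ≤ η)
    (g g' g'' : ℝ → ℝ)
    (hg : ∀ t ∈ Icc (-1:ℝ) 1, HasDerivWithinAt g (g' t) (Icc (-1:ℝ) 1) t)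
    (hg'c : ContinuousOn g' (Icc (-1:ℝ) 1))
    (hgftc : ∀ s ∈ Icc (-1:ℝ) 1, ∀ t ∈ Icc (-1:ℝ) 1, g' t - g' s = ∫ x in s..t, g'' x)
    (hgeq : ∀ᵐ t ∂(volume.restrict (Icc (-1:ℝ) 1)),
      g'' t - α * Φ t * g t = c * η * Φ t * h (t / η)) :
    |θ * g' 1 - g' (-1)| ≤ (2 / 3) * |c| * M * MΦ * Mu / η := by
  have h11 : (-1:ℝ) ≤ 1 := by norm_num
  have hη0 : 0 < η := by linarith
  have hMΦ : 0 ≤ MΦ := (abs_nonneg _).trans (hΦbd 0)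
  have hMu : 0 ≤ Mu := (abs_nonneg _).trans (hubd 0)
  have huc : Continuous u := continuous_iff_continuousAt.2 fun t => (hu t).continuousAt
  have hgc : ContinuousOn g (Icc (-1:ℝ) 1) := fun t ht => (hg t ht).continuousWithinAt
  -- One-sided constancy of `u` forces `u'` to vanish at both endpoints.
  have hu1 : u' 1 = 0 := by
    have h1 : HasDerivWithinAt u (u' 1) (Ici 1) 1 := (hu 1).hasDerivWithinAt
    have h2 : HasDerivWithinAt u 0 (Ici 1) 1 :=
      (hasDerivWithinAt_const (1:ℝ) (Ici 1) θ).congr (fun x hx => hnorm₂ x hx) (hnorm₂ 1 le_rfl)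
    exact (uniqueDiffWithinAt_Ici (1:ℝ)).eq_deriv _ h1 h2
  have hum1 : u' (-1) = 0 := by
    have h1 : HasDerivWithinAt u (u' (-1)) (Iic (-1)) (-1) := (hu (-1)).hasDerivWithinAt
    have h2 : HasDerivWithinAt u 0 (Iic (-1)) (-1) :=
      (hasDerivWithinAt_const (-1:ℝ) (Iic (-1)) (1:ℝ)).congr (fun x hx => hnorm₁ x hx)
        (hnorm₁ (-1) le_rfl)
    exact (uniqueDiffWithinAt_Iic (-1:ℝ)).eq_deriv _ h1 h2
  have hΦint : IntervalIntegrable Φ volume (-1) 1 :=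
    (intervalIntegrable_const (c := MΦ)).mono_fun hΦmeas.aestronglyMeasurable
      (Filter.Eventually.of_forall fun t => by
        simpa [abs_of_nonneg hMΦ] using hΦbd t)
  have hRint : IntervalIntegrable (fun t => Φ t * h (t / η)) volume (-1) 1 := by
    have hb : IntervalIntegrable (fun t : ℝ => MΦ * (M * (t / η) ^ 2)) volume (-1) 1 :=
      Continuous.intervalIntegrable (by fun_prop) _ _
    refine hb.mono_fun
      (hΦmeas.mul (hhmeas.comp (measurable_id.div_const η))).aestronglyMeasurable
      (Filter.Eventually.of_forall fun t => ?_)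
    have h0 : 0 ≤ MΦ * (M * (t / η) ^ 2) := by positivity
    simp only [Real.norm_eq_abs]
    rw [abs_mul, abs_of_nonneg h0]
    exact mul_le_mul (hΦbd t) (hhbd _) (abs_nonneg _) hMΦ
  have hgeq' : ∀ᵐ t : ℝ ∂volume, t ∈ uIoc (-1:ℝ) 1 →
      g'' t = α * (Φ t * g t) + c * η * (Φ t * h (t / η)) := by
    filter_upwards [(ae_restrict_iff' measurableSet_Icc).1 hgeq] with t ht htI
    rw [uIoc_of_le h11] at htI
    linear_combination ht (Ioc_subset_Icc_self htI)
  -- The second derivatives are integrable because the equations express them by bounded functions.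
  have hu''int : IntervalIntegrable u'' volume (-1) 1 := by
    refine ((hΦint.mul_continuousOn huc.continuousOn).const_mul α).congr_ae ?_
    refine ae_restrict_of_ae ?_
    filter_upwards [hueq] with t ht
    rw [ht]; ring
  have hg''int : IntervalIntegrable g'' volume (-1) 1 := by
    have hgc' : ContinuousOn g (uIcc (-1:ℝ) 1) := by rwa [uIcc_of_le h11]
    refine (((hΦint.mul_continuousOn hgc').const_mul α).add (hRint.const_mul (c * η))).congr_ae ?_
    rw [Filter.EventuallyEq, ae_restrict_iff' measurableSet_uIoc]
    filter_upwards [hgeq'] with t ht htI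
    rw [ht htI]
  have hu'int : IntervalIntegrable u' volume (-1) 1 := hu'c.intervalIntegrable _ _
  have hg'int : IntervalIntegrable g' volume (-1) 1 := hg'c.intervalIntegrable_of_Icc h11
  have hm1 : (-1:ℝ) ∈ Icc (-1:ℝ) 1 := left_mem_Icc.2 h11
  have hFu := sub_eq_integral_of_C1 (a := -1) (b := 1) (fun t _ => (hu t).hasDerivWithinAt)
    hu'c.continuousOn
  have hFg := sub_eq_integral_of_C1 hg hg'c
  have I1 := integral_parts h11 hu'int hg''int hFu (fun t ht => hgftc (-1) hm1 t ht)
  have I2 := integral_parts h11 hu''int hg'int (fun t _ => huftc (-1) t) hFg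
  rw [hnorm₂ 1 le_rfl, hnorm₁ (-1) le_rfl] at I1
  rw [hu1, hum1] at I2
  have hcu : ContinuousOn u (uIcc (-1:ℝ) 1) := huc.continuousOn
  have hcu' : ContinuousOn u' (uIcc (-1:ℝ) 1) := hu'c.continuousOn
  have hcg : ContinuousOn g (uIcc (-1:ℝ) 1) := by rwa [uIcc_of_le h11]
  have hcg' : ContinuousOn g' (uIcc (-1:ℝ) 1) := by rwa [uIcc_of_le h11]
  have I3 := intervalIntegral.integral_sub
    ((hu'int.mul_continuousOn hcg').add (hg''int.continuousOn_mul hcu))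
    ((hu''int.mul_continuousOn hcg).add (hg'int.continuousOn_mul hcu'))
  have hW : θ * g' 1 - g' (-1) =
      ∫ t in (-1:ℝ)..1, c * η * u t * (Φ t * h (t / η)) := by
    have e : θ * g' 1 - g' (-1) = (θ * g' 1 - 1 * g' (-1)) - (0 * g 1 - 0 * g (-1)) := by ring
    rw [e, ← I1, ← I2]
    refine Eq.trans I3.symm (intervalIntegral.integral_congr_ae ?_)
    filter_upwards [hueq, hgeq'] with t h1 h2 ht
    rw [h1, h2 ht]
    ring
  have hbound : ∀ t : ℝ, ‖c * η * u t * (Φ t * h (t / η))‖ ≤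
      |c| * M * MΦ * Mu / η * t ^ 2 := by
    intro t
    have e : |c| * M * MΦ * Mu / η * t ^ 2 = |c| * η * Mu * (MΦ * (M * (t / η) ^ 2)) := by
      field_simp
    rw [e]
    simp only [Real.norm_eq_abs, abs_mul, abs_of_pos hη0]
    gcongr
    exacts [hubd t, hΦbd t, hhbd _]
  rw [hW, ← Real.norm_eq_abs]
  refine (intervalIntegral.norm_integral_le_of_norm_le h11
    (Filter.Eventually.of_forall fun t _ => hbound t)
    (Continuous.intervalIntegrable (by fun_prop) _ _)).trans (le_of_eq ?_)
  rw [intervalIntegral.integral_const_mul, integral_pow]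
  norm_num
  ring
end

section
/- Let Φ, Ψ ∈ 𝒫, α ∈ ℝ, and let u : ℝ → ℝ be a bounded continuously differentiable function with absolutely continuous derivative satisfying u'' = α Φ u almost everywhere on ℝ, normalized so that u(t) = 1 for t ≤ −1 and u(t) = θ for t ≥ 1. Then there exists a constant C > 0, depending only on Ψ, α, Φ, and u, such that for every c ∈ ℝ, every η ∈ (0, 1], and every continuously differentiable g : [−1, 1] → ℝ with absolutely continuous derivative satisfying g''(t) − α Φ(t) g(t) = c η^{−1} Ψ(t/η) u(t) for almost every t ∈ [−1, 1], one has | θ g'(1) − g'(−1) − c u(0)² ∫_ℝ Ψ(t) dt | ≤ C |c| η. -/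
open MeasureTheory Set

/-!
The Wronskian-type quantity `u g' - u' g` has derivative `u g'' - u'' g = c η⁻¹ Ψ(t/η) u²` almost
everywhere on `[-1, 1]`. Since `u'(±1) = 0`, `u(-1) = 1` and `u(1) = θ`, integrating it gives
`θ g'(1) - g'(-1) = c η⁻¹ ∫ Ψ(t/η) u(t)² dt = c ∫ Ψ(s) u(η s)² ds`. As `u²` is Lipschitz on
`[-1, 1]`, replacing `u(η s)²` by `u(0)²` costs `O(|c| η)`.

The Wronskian identity is obtained by applying `integral_by_parts_of_primitive` to the pairs
`(u, g')` and `(g, u')` and subtracting.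
-/

/-- Integration by parts for indefinite integrals of integrable functions. The functions are only
required to agree with their primitives on `[a, b]`, so no pointwise differentiability is needed. -/
theorem integral_by_parts_of_primitive {a b : ℝ} (hab : a ≤ b) {F G f g : ℝ → ℝ}
    (hf : IntervalIntegrable f volume a b) (hg : IntervalIntegrable g volume a b)
    (hF : ∀ t ∈ Icc a b, F t - F a = ∫ x in a..t, f x)
    (hG : ∀ t ∈ Icc a b, G t - G a = ∫ x in a..t, g x) :
    ∫ x in a..b, (f x * G x + F x * g x) = F b * G b - F a * G a := by
  have key : ∀ {h : ℝ → ℝ} (k : ℝ), IntervalIntegrable h volume a b →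
      AbsolutelyContinuousOnInterval (fun t => k + ∫ x in a..t, h x) a b ∧
      ∀ᵐ t, t ∈ uIcc a b → deriv (fun t => k + ∫ x in a..t, h x) t = h t := by
    intro h k hh
    constructor
    · have h1 : AbsolutelyContinuousOnInterval (fun _ : ℝ => k) a b :=
        (LipschitzWith.const k).lipschitzOnWith.absolutelyContinuousOnInterval
      exact h1.add (hh.absolutelyContinuousOnInterval_intervalIntegral (c := a) (by simp))
    · filter_upwards [hh.ae_hasDerivAt_integral] with t ht ht'
      exact ((ht ht' a (by simp)).const_add k).deriv
  obtain ⟨hFac, hFd⟩ := key (F a) hf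
  obtain ⟨hGac, hGd⟩ := key (G a) hg
  have hF' : ∀ t ∈ Icc a b, F a + ∫ x in a..t, f x = F t := fun t ht => by
    rw [← hF t ht]; ring
  have hG' : ∀ t ∈ Icc a b, G a + ∫ x in a..t, g x = G t := fun t ht => by
    rw [← hG t ht]; ring
  have main := hFac.integral_deriv_mul_eq_sub hGac
  rw [hF' b ⟨hab, le_rfl⟩, hG' b ⟨hab, le_rfl⟩, hF' a ⟨le_rfl, hab⟩, hG' a ⟨le_rfl, hab⟩] at main
  rw [← main]
  apply intervalIntegral.integral_congr_ae
  filter_upwards [hFd, hGd] with t h1 h2 ht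
  have ht' : t ∈ uIcc a b := uIoc_subset_uIcc ht
  rw [h1 ht', h2 ht']
  rw [uIcc_of_le hab] at ht'
  rw [hF' t ht', hG' t ht']

theorem integral_eq_intervalIntegral_of_support {f : ℝ → ℝ}
    (hf : ∀ t, t ∉ Icc (-1 : ℝ) 1 → f t = 0) : ∫ t, f t = ∫ t in (-1 : ℝ)..1, f t := by
  rw [intervalIntegral.integral_of_le (by norm_num), ← integral_Icc_eq_integral_Ioc,
    setIntegral_eq_integral_of_forall_compl_eq_zero hf]

theorem intervalIntegrable_of_bounded {f : ℝ → ℝ} (hf : Measurable f) {M : ℝ}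
    (hM : ∀ t, |f t| ≤ M) (a b : ℝ) : IntervalIntegrable f volume a b := by
  refine (intervalIntegrable_const (c := M)).mono_fun hf.aestronglyMeasurable ?_
  exact Filter.Eventually.of_forall fun t => (hM t).trans (le_abs_self M)

/-- Rescaling: concentrating `Ψ` at scale `η ≤ 1` keeps its support inside `[-1, 1]`, so the
substitution `t = η s` leaves the interval of integration unchanged. -/
theorem integral_rescale {Ψ w : ℝ → ℝ} (hΨsupp : ∀ t, t ∉ Icc (-1 : ℝ) 1 → Ψ t = 0) {η : ℝ}
    (hη : 0 < η) (hη1 : η ≤ 1) :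
    ∫ t in (-1 : ℝ)..1, η⁻¹ * Ψ (t / η) * w t = ∫ s in (-1 : ℝ)..1, Ψ s * w (η * s) := by
  have h1 : ∀ t, t ∉ Icc (-1 : ℝ) 1 → η⁻¹ * Ψ (t / η) * w t = 0 := by
    intro t ht
    rw [hΨsupp (t / η) ?_]
    · ring
    · rintro ⟨h1, h2⟩
      rw [le_div_iff₀ hη] at h1
      rw [div_le_iff₀ hη] at h2
      exact ht ⟨by linarith, by linarith⟩
  rw [← integral_eq_intervalIntegral_of_support h1,
    ← integral_eq_intervalIntegral_of_support (f := fun s => Ψ s * w (η * s))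
      (fun t ht => by simp [hΨsupp t ht])]
  have h2 := Measure.integral_comp_div (fun s => Ψ s * w (η * s)) η
  have h3 : ∀ t, η⁻¹ * Ψ (t / η) * w t = η⁻¹ * (Ψ (t / η) * w (η * (t / η))) := fun t => by
    rw [mul_div_cancel₀ t hη.ne', mul_assoc]
  simp_rw [h3]
  rw [integral_const_mul, h2, abs_of_pos hη, smul_eq_mul, inv_mul_cancel_left₀ hη.ne']

/-- Let `Φ, Ψ ∈ 𝒫`, `α ∈ ℝ`, and let `u` be a bounded `C¹` function with
absolutely continuous derivative satisfying `u'' = α Φ u` a.e. on `ℝ`, normalized so that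
`u(t) = 1` for `t ≤ −1` and `u(t) = θ` for `t ≥ 1`.  Then there is `C > 0`, depending only on
`Ψ`, `α`, `Φ`, and `u`, such that: for every `c ∈ ℝ`, every `η ∈ (0, 1]` and every `C¹` function
`g : [−1, 1] → ℝ` with absolutely continuous derivative satisfying
`g'' − α Φ g = c η⁻¹ Ψ(t/η) u(t)` a.e. on `[−1, 1]`, one has
`| θ g'(1) − g'(−1) − c u(0)² ∫_ℝ Ψ | ≤ C |c| η`. -/
theorem statement16
    (α θ : ℝ) (Φ Ψ : ℝ → ℝ)
    (hΦmeas : Measurable Φ) (MΦ : ℝ) (hΦbd : ∀ t, |Φ t| ≤ MΦ)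
    (hΦsupp : ∀ t, t ∉ Icc (-1:ℝ) 1 → Φ t = 0)
    (hΨmeas : Measurable Ψ) (MΨ : ℝ) (hΨbd : ∀ t, |Ψ t| ≤ MΨ)
    (hΨsupp : ∀ t, t ∉ Icc (-1:ℝ) 1 → Ψ t = 0)
    (u u' u'' : ℝ → ℝ) (K : ℝ) (huK : ∀ t, |u t| ≤ K)
    (hu : ∀ t, HasDerivAt u (u' t) t)
    (hu'c : Continuous u')
    (huftc : ∀ s t : ℝ, u' t - u' s = ∫ x in s..t, u'' x)
    (hueq : ∀ᵐ t : ℝ ∂volume, u'' t = α * Φ t * u t)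
    (hnorm₁ : ∀ t ≤ (-1:ℝ), u t = 1) (hnorm₂ : ∀ t, (1:ℝ) ≤ t → u t = θ) :
    ∃ C > 0, ∀ c η : ℝ, 0 < η → η ≤ 1 →
      ∀ g g' g'' : ℝ → ℝ,
        (∀ t ∈ Icc (-1:ℝ) 1, HasDerivWithinAt g (g' t) (Icc (-1:ℝ) 1) t) →
        ContinuousOn g' (Icc (-1:ℝ) 1) →
        (∀ s ∈ Icc (-1:ℝ) 1, ∀ t ∈ Icc (-1:ℝ) 1, g' t - g' s = ∫ x in s..t, g'' x) →
        (∀ᵐ t ∂(volume.restrict (Icc (-1:ℝ) 1)),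
          g'' t - α * Φ t * g t = c * η⁻¹ * Ψ (t / η) * u t) →
        |θ * g' 1 - g' (-1) - c * u 0 ^ 2 * ∫ t, Ψ t| ≤ C * |c| * η := by
  have hle : (-1 : ℝ) ≤ 1 := by norm_num
  have huc : Continuous u := continuous_iff_continuousAt.2 fun t => (hu t).continuousAt
  have hK : 0 ≤ K := (abs_nonneg _).trans (huK 0)
  have hMΨ : 0 ≤ MΨ := (abs_nonneg _).trans (hΨbd 0)
  -- The boundary slopes vanish: `u` is constant on each outer half-line, and one-sided
  -- derivatives are unique.
  have hu1 : u' 1 = 0 := by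
    refine (uniqueDiffOn_Ici (1 : ℝ) 1 self_mem_Ici).eq_deriv _ (hu 1).hasDerivWithinAt ?_
    exact (hasDerivWithinAt_const (1 : ℝ) (Ici 1) θ).congr (fun t ht => hnorm₂ t ht)
      (hnorm₂ 1 le_rfl)
  have hum1 : u' (-1) = 0 := by
    refine (uniqueDiffOn_Iic (-1 : ℝ) (-1) self_mem_Iic).eq_deriv _
      (hu (-1)).hasDerivWithinAt ?_
    exact (hasDerivWithinAt_const (-1 : ℝ) (Iic (-1)) 1).congr (fun t ht => hnorm₁ t ht)
      (hnorm₁ (-1) le_rfl)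
  obtain ⟨D, hD⟩ := (isCompact_Icc (a := (-1 : ℝ)) (b := 1)).exists_bound_of_continuousOn
    hu'c.continuousOn
  have hD0 : 0 ≤ D := (norm_nonneg _).trans (hD 0 (by constructor <;> norm_num))
  have hlip : ∀ t ∈ Icc (-1 : ℝ) 1, |u t ^ 2 - u 0 ^ 2| ≤ 2 * K * D * |t| := by
    intro t ht
    have h1 : |u t - u 0| ≤ D * |t| := by
      simpa using (convex_Icc (-1 : ℝ) 1).norm_image_sub_le_of_norm_hasDerivWithin_le
        (fun x _ => (hu x).hasDerivWithinAt) hD (x := 0) (by constructor <;> norm_num) ht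
    have h2 : |u t + u 0| ≤ 2 * K := by
      linarith [abs_add_le (u t) (u 0), huK t, huK 0]
    calc |u t ^ 2 - u 0 ^ 2| = |u t + u 0| * |u t - u 0| := by rw [← abs_mul]; ring_nf
      _ ≤ (2 * K) * (D * |t|) := by gcongr
      _ = 2 * K * D * |t| := by ring
  have hΦint := intervalIntegrable_of_bounded hΦmeas hΦbd (-1) 1
  have hΨint := intervalIntegrable_of_bounded hΨmeas hΨbd (-1) 1
  have hu''int : IntervalIntegrable u'' volume (-1) 1 := by
    refine ((hΦint.const_mul α).mul_continuousOn huc.continuousOn).congr_ae ?_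
    exact ae_restrict_of_ae (hueq.mono fun t ht => ht.symm)
  refine ⟨4 * MΨ * K * D + 1, by positivity, ?_⟩
  intro c η hη hη1 g g' g'' hg hg'c hgftc hgeq
  have hgc : ContinuousOn g (Icc (-1) 1) := fun t ht => (hg t ht).continuousWithinAt
  have hgprim : ∀ t ∈ Icc (-1 : ℝ) 1, g t - g (-1) = ∫ x in (-1)..t, g' x := by
    intro t ht
    have hsub : Icc (-1) t ⊆ Icc (-1 : ℝ) 1 := Icc_subset_Icc_right ht.2
    refine (intervalIntegral.integral_eq_sub_of_hasDerivAt_of_le ht.1 (hgc.mono hsub)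
      (fun x hx => ?_) ?_).symm
    · exact (hg x (hsub (Ioo_subset_Icc_self hx))).hasDerivAt
        (Icc_mem_nhds hx.1 (hx.2.trans_le ht.2))
    · exact ContinuousOn.intervalIntegrable_of_Icc ht.1 (hg'c.mono hsub)
  have huprim : ∀ t ∈ Icc (-1 : ℝ) 1, u t - u (-1) = ∫ x in (-1)..t, u' x := fun t _ =>
    (intervalIntegral.integral_eq_sub_of_hasDerivAt (fun x _ => hu x)
      (hu'c.intervalIntegrable _ _)).symm
  have hg'int : IntervalIntegrable g' volume (-1) 1 :=
    ContinuousOn.intervalIntegrable_of_Icc hle hg'c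
  have hu'int : IntervalIntegrable u' volume (-1) 1 := hu'c.intervalIntegrable _ _
  have hgeq' : ∀ᵐ t ∂(volume.restrict (uIoc (-1 : ℝ) 1)),
      g'' t - α * Φ t * g t = c * η⁻¹ * Ψ (t / η) * u t := by
    rw [uIoc_of_le hle]
    exact ae_restrict_of_ae_restrict_of_subset Ioc_subset_Icc_self hgeq
  have hΨηint : IntervalIntegrable (fun t => Ψ (t / η)) volume (-1) 1 :=
    intervalIntegrable_of_bounded (hΨmeas.comp (measurable_id.div_const η))
      (fun t => hΨbd _) (-1) 1
  have hg''int : IntervalIntegrable g'' volume (-1) 1 := by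
    have h1 : IntervalIntegrable
        (fun t => α * Φ t * g t + c * η⁻¹ * Ψ (t / η) * u t) volume (-1) 1 :=
      ((hΦint.const_mul α).mul_continuousOn (by rwa [uIcc_of_le hle])).add
        ((hΨηint.const_mul (c * η⁻¹)).mul_continuousOn huc.continuousOn)
    refine h1.congr_ae ?_
    filter_upwards [hgeq'] with t ht
    rw [← ht]; ring
  have hgIcc : ContinuousOn g (uIcc (-1) 1) := by rwa [uIcc_of_le hle]
  have hg'Icc : ContinuousOn g' (uIcc (-1) 1) := by rwa [uIcc_of_le hle]
  have hm1 : (-1 : ℝ) ∈ Icc (-1 : ℝ) 1 := ⟨le_rfl, hle⟩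
  have e1 := integral_by_parts_of_primitive hle hu'int hg''int huprim
    (fun t ht => hgftc (-1) hm1 t ht)
  have e2 := integral_by_parts_of_primitive hle hg'int hu''int hgprim
    (fun t _ => huftc (-1) t)
  rw [hnorm₂ 1 le_rfl, hnorm₁ (-1) le_rfl] at e1
  rw [hu1, hum1] at e2
  have e3 : θ * g' 1 - g' (-1) = c * ∫ s in (-1 : ℝ)..1, Ψ s * u (η * s) ^ 2 := by
    have e4 : θ * g' 1 - g' (-1) = ∫ t in (-1 : ℝ)..1,
        ((u' t * g' t + u t * g'' t) - (g' t * u' t + g t * u'' t)) := by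
      rw [intervalIntegral.integral_sub, e1, e2]
      · ring
      · exact (hu'int.mul_continuousOn hg'Icc).add (hg''int.continuousOn_mul huc.continuousOn)
      · exact (hg'int.mul_continuousOn hu'c.continuousOn).add (hu''int.continuousOn_mul hgIcc)
    rw [e4, ← integral_rescale (w := fun t => u t ^ 2) hΨsupp hη hη1,
      ← intervalIntegral.integral_const_mul]
    apply intervalIntegral.integral_congr_ae_restrict
    filter_upwards [hgeq', ae_restrict_of_ae hueq] with t h1 h2
    rw [h2]
    linear_combination u t * h1
  have e5 : θ * g' 1 - g' (-1) - c * u 0 ^ 2 * ∫ t, Ψ t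
      = c * ∫ s in (-1 : ℝ)..1, Ψ s * (u (η * s) ^ 2 - u 0 ^ 2) := by
    have hcont : Continuous fun s => u (η * s) ^ 2 := by fun_prop
    simp_rw [mul_sub]
    rw [e3, integral_eq_intervalIntegral_of_support hΨsupp, intervalIntegral.integral_sub
      (hΨint.mul_continuousOn hcont.continuousOn) (hΨint.mul_const _),
      intervalIntegral.integral_mul_const]
    ring
  have hbound : ‖∫ s in (-1 : ℝ)..1, Ψ s * (u (η * s) ^ 2 - u 0 ^ 2)‖
      ≤ MΨ * (2 * K * D * η) * |1 - (-1 : ℝ)| := by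
    apply intervalIntegral.norm_integral_le_of_norm_le_const
    intro s hs
    rw [uIoc_of_le hle] at hs
    have hs1 : |s| ≤ 1 := abs_le.2 ⟨hs.1.le, hs.2⟩
    have hηs : |η * s| ≤ η := by
      rw [abs_mul, abs_of_pos hη]
      exact mul_le_of_le_one_right hη.le hs1
    rw [norm_mul]
    gcongr
    · exact hΨbd s
    · exact (hlip _ (abs_le.1 (hηs.trans hη1))).trans (by gcongr)
  rw [e5, abs_mul]
  calc |c| * |∫ s in (-1 : ℝ)..1, Ψ s * (u (η * s) ^ 2 - u 0 ^ 2)|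
      ≤ |c| * (MΨ * (2 * K * D * η) * |1 - (-1 : ℝ)|) := by gcongr; exact hbound
    _ = (4 * MΨ * K * D) * |c| * η := by norm_num; ring
    _ ≤ (4 * MΨ * K * D + 1) * |c| * η := by gcongr; linarith
end
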